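/- Let φ be an endomorphism of ℙ¹ defined over a number field K with good reduction at a nonzero prime 𝔭 of K. Let P₀ ∈ ℙ¹(K) be a fixed point of φ. Let a, b be integers with 0 < a < b, and let P_b, P_a ∈ ℙ¹(K) be points such that φ^b(P_b) = φ^a(P_a) = P₀ and φ^{b−a}(P_b) = P_a. Then δ_𝔭(P_b, P_a) = δ_𝔭(P_b, P₀) ≤ δ_𝔭(P_a, P₀). -/

import Mathlib

open NumberField IsDedekindDomain MvPolynomial
open scoped Classical nonZeroDivisors

set_option synthInstance.maxHeartbeats 1000000
set_option maxHeartbeats 1000000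

noncomputable section

/-- The projective line over `K`. -/
abbrev P1 (K : Type*) [Field K] := Projectivization K (Fin 2 → K)

variable {K : Type*} [Field K] [NumberField K]

/-- The additive `v`-adic valuation (order) of `x ∈ K`, with junk value `0` at `x = 0`,
normalized so that it is surjective onto `ℤ`. -/
def ordAt (v : HeightOneSpectrum (𝓞 K)) (x : K) : ℤ :=
  if hx : x = 0 then 0
  else - Multiplicative.toAdd (WithZero.unzero ((v.valuation K).ne_zero_iff.mpr hx))

/-- `min (v(x), v(y))` for a pair of coordinates, not both zero. -/
def minOrd (v : HeightOneSpectrum (𝓞 K)) (x y : K) : ℤ :=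
  if x = 0 then ordAt v y else if y = 0 then ordAt v x else min (ordAt v x) (ordAt v y)

/-- The `v`-adic logarithmic distance between two points of `ℙ¹(K)`:
`δ_v(P,Q) = v(x₁y₂ - x₂y₁) - min(v x₁, v y₁) - min(v x₂, v y₂)`, with value `⊤` when `P = Q`
(it is independent of the choice of homogeneous coordinates, so we compute it on the chosen
representatives). -/
def logDist (v : HeightOneSpectrum (𝓞 K)) (P Q : P1 K) : WithTop ℤ :=
  if P = Q then ⊤
  else ((ordAt v (P.rep 0 * Q.rep 1 - P.rep 1 * Q.rep 0)
        - minOrd v (P.rep 0) (P.rep 1) - minOrd v (Q.rep 0) (Q.rep 1) : ℤ) : WithTop ℤ)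

/-- An endomorphism of `ℙ¹` of degree `d` defined over `K`, given by a pair of homogeneous
forms of degree `d` with no common zero over the algebraic closure, together with the induced
self-map of `ℙ¹(K)`. -/
structure P1Map (K : Type*) [Field K] (d : ℕ) where
  toFun : P1 K → P1 K
  F : MvPolynomial (Fin 2) K
  G : MvPolynomial (Fin 2) K
  homF : F.IsHomogeneous d
  homG : G.IsHomogeneous d
  coprime : ∀ x y : AlgebraicClosure K,
    aeval ![x, y] F = 0 → aeval ![x, y] G = 0 → x = 0 ∧ y = 0
  compat : ∀ (x y : K) (hxy : ![x, y] ≠ 0)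
    (h : ![eval ![x, y] F, eval ![x, y] G] ≠ 0),
    toFun (Projectivization.mk K ![x, y] hxy) =
      Projectivization.mk K ![eval ![x, y] F, eval ![x, y] G] h

variable {d : ℕ}

/-- `φ` has good reduction at the finite place `v`: some representing pair of forms has
coefficients in the valuation ring at `v`, not all in the maximal ideal, and the reductions
of the two forms modulo `v` have no common zero in `ℙ¹` of the algebraic closure of the
residue field. -/
def GoodReductionAt (φ : P1Map K d) (v : HeightOneSpectrum (𝓞 K)) : Prop :=
  ∃ c : K, c ≠ 0 ∧
    ∃ F₀ G₀ : MvPolynomial (Fin 2) (v.valuation (K := K)).valuationSubring,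
      MvPolynomial.map ((v.valuation (K := K)).valuationSubring.subtype) F₀ = C c * φ.F ∧
      MvPolynomial.map ((v.valuation (K := K)).valuationSubring.subtype) G₀ = C c * φ.G ∧
      ((∃ m, F₀.coeff m ∉ IsLocalRing.maximalIdeal (v.valuation (K := K)).valuationSubring) ∨
        (∃ m, G₀.coeff m ∉ IsLocalRing.maximalIdeal (v.valuation (K := K)).valuationSubring)) ∧
      ∀ x y : AlgebraicClosure
          (IsLocalRing.ResidueField (v.valuation (K := K)).valuationSubring),
        eval ![x, y] (MvPolynomial.map
          ((algebraMap (IsLocalRing.ResidueField (v.valuation (K := K)).valuationSubring)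
              (AlgebraicClosure _)).comp
            (IsLocalRing.residue _)) F₀) = 0 →
        eval ![x, y] (MvPolynomial.map
          ((algebraMap (IsLocalRing.ResidueField (v.valuation (K := K)).valuationSubring)
              (AlgebraicClosure _)).comp
            (IsLocalRing.residue _)) G₀) = 0 →
        x = 0 ∧ y = 0

/-- `φ` has good reduction outside `S`, where `S` consists of all archimedean places together
with the finite places in `T`. -/
def GoodReductionOutside (φ : P1Map K d) (T : Finset (HeightOneSpectrum (𝓞 K))) : Prop :=
  ∀ v ∉ T, GoodReductionAt φ v

/-- `P` is a periodic point of `φ`. -/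
def IsPeriodicPoint (φ : P1Map K d) (P : P1 K) : Prop :=
  ∃ n, 0 < n ∧ φ.toFun^[n] P = P

/-- `P` is a preperiodic point of `φ`. -/
def IsPreperiodicPoint (φ : P1Map K d) (P : P1 K) : Prop :=
  ∃ m, IsPeriodicPoint φ (φ.toFun^[m] P)

/-- `P` is a tail point of `φ`: preperiodic but not periodic. -/
def IsTailPoint (φ : P1Map K d) (P : P1 K) : Prop :=
  IsPreperiodicPoint φ P ∧ ¬ IsPeriodicPoint φ P

/-- The set `Tail(φ,K,P)` of `K`-rational tail points of `P`: non-periodic points having `P`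
in their forward orbit. -/
def TailOf (φ : P1Map K d) (P : P1 K) : Set (P1 K) :=
  {Q | ¬ IsPeriodicPoint φ Q ∧ ∃ n, φ.toFun^[n] Q = P}

/-- `P = [a:b]` is a critical point of `φ = [F:G]`: the algebraic condition
`φ([x:y]) = φ([a:b])`, i.e. the form `G(a,b)·F(X,Y) - F(a,b)·G(X,Y)`, vanishes to order
at least `2` at `[a:b]`. -/
def IsCriticalPt (φ : P1Map K d) (P : P1 K) : Prop :=
  ∃ (a b : K) (hab : ![a, b] ≠ 0), P = Projectivization.mk K ![a, b] hab ∧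
    (C b * X 0 - C a * X 1) ^ 2 ∣
      (C (eval ![a, b] φ.G) * φ.F - C (eval ![a, b] φ.F) * φ.G)

/-- `P` belongs to a critical cycle of `φ`: it lies in the orbit of a critical periodic
point. -/
def InCriticalCycle (φ : P1Map K d) (P : P1 K) : Prop :=
  ∃ Q, IsCriticalPt φ Q ∧ IsPeriodicPoint φ Q ∧ ∃ n, φ.toFun^[n] Q = P

/-- The cardinality `|S|` of the set of places `S` consisting of all archimedean places
together with the finite places in `T`. -/
def sCard (K : Type*) [Field K] [NumberField K] (T : Finset (HeightOneSpectrum (𝓞 K))) : ℕ :=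
  T.card + Fintype.card (InfinitePlace K)

/-- `B(s) = 2^{16 s}`. -/
def Bconst (s : ℕ) : ℕ := 2 ^ (16 * s)

/-- `C(n,s) = e^{(6n)^{3n} (n s + 1 - n)}`. -/
def Cconst (n s : ℕ) : ℝ := Real.exp ((6 * n : ℝ) ^ (3 * n) * (n * s + 1 - n))

/-- `CV(d,s) = (3B(s)+13)d + 27B(s) + C(5,s) + 6C(3,s) + 32`. -/
def CVconst (d s : ℕ) : ℝ :=
  (3 * (Bconst s : ℝ) + 13) * d + 27 * (Bconst s : ℝ) + Cconst 5 s + 6 * Cconst 3 s + 32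

/-- `L₁(d,s) = (d-1)(1 + d(1 + B(s)))`. -/
def L1const (d s : ℕ) : ℕ := (d - 1) * (1 + d * (1 + Bconst s))

/-- `L₂(d,s) = max{(2(C(3,s)+2)+1)d + 1, (d-1)(1 + B(s)(B(s) + C(3,s) + 3))}`. -/
def L2const (d s : ℕ) : ℝ :=
  max ((2 * (Cconst 3 s + 2) + 1) * d + 1)
    (((d : ℝ) - 1) * (1 + (Bconst s : ℝ) * ((Bconst s : ℝ) + Cconst 3 s + 3)))

/-- `L₃(d,s) = ((1 + 3B(s))B(s) + 1)(d-1)`. -/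
def L3const (d s : ℕ) : ℕ := ((1 + 3 * Bconst s) * Bconst s + 1) * (d - 1)

/-- `L₄(d,s) = (C(3,s) + 3)(d-1)`. -/
def L4const (d s : ℕ) : ℝ := (Cconst 3 s + 3) * ((d : ℝ) - 1)

end

/-! A map `φ = [F : G]` with good reduction at `𝔭` never moves points apart `𝔭`-adically: on
unimodular integral coordinates the values of the integral forms are again unimodular, and
`p₀q₁ - p₁q₀` divides `F(p)G(q) - G(p)F(q)`. So `δ(P, Q) ≤ δ(φ P, φ Q)`, and applying this to
`ψ = φ^(b-a)` gives the inequality. Together with `min (δ(P, Q)) (δ(Q, R)) ≤ δ(P, R)` it yields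
`δ(P_b, ψ P_b) ≤ δ(P_b, ψ^k P_b)` for all `k > 0`, and `ψ^k P_b = P₀` once `k (b - a) ≥ b`. -/

section Iterate

variable {X α : Type*} {δ : X → X → α} {f : X → X}

lemma le_apply_iterate [Preorder α] (hf : ∀ x y, δ x y ≤ δ (f x) (f y)) (n : ℕ) (x y : X) :
    δ x y ≤ δ (f^[n] x) (f^[n] y) := by
  induction n generalizing x y with
  | zero => exact le_rfl
  | succ n ih => exact (hf x y).trans (ih (f x) (f y))

lemma apply_iterate_le_apply_iterate_mul [LinearOrder α]
    (hf : ∀ x y, δ x y ≤ δ (f x) (f y)) (hmin : ∀ x y z, min (δ x y) (δ y z) ≤ δ x z)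
    (n : ℕ) {k : ℕ} (hk : 0 < k) (x : X) :
    δ x (f^[n] x) ≤ δ x (f^[n * k] x) := by
  induction k, hk using Nat.le_induction with
  | base => simp
  | succ k _ ih =>
    have hstep : δ x (f^[n] x) ≤ δ (f^[n * k] x) (f^[n * (k + 1)] x) := by
      rw [Nat.mul_succ, Function.iterate_add_apply]
      exact le_apply_iterate hf (n * k) x (f^[n] x)
    exact (le_min ih hstep).trans (hmin _ _ _)

theorem apply_iterate_eq_of_iterate_eq_fixed [LinearOrder α]
    (hf : ∀ x y, δ x y ≤ δ (f x) (f y)) (hcomm : ∀ x y, δ x y = δ y x)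
    (hmin : ∀ x y z, min (δ x y) (δ y z) ≤ δ x z)
    {p x : X} (hp : f p = p) {m n : ℕ} (hn : 0 < n) (hx : f^[m] x = p) :
    δ x (f^[n] x) = δ x p := by
  apply le_antisymm
  · have hreach : f^[n * (m + 1)] x = p := by
      obtain ⟨j, hj⟩ : ∃ j, n * (m + 1) = j + m :=
        ⟨n * (m + 1) - m, by have := Nat.le_mul_of_pos_left (m + 1) hn; omega⟩
      rw [hj, Function.iterate_add_apply, hx, Function.iterate_fixed hp]
    simpa only [hreach] using apply_iterate_le_apply_iterate_mul hf hmin n m.succ_pos x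
  · have himage : δ x p ≤ δ (f^[n] x) p := by
      simpa only [Function.iterate_fixed hp] using le_apply_iterate hf n x p
    exact (le_min le_rfl (himage.trans_eq (hcomm _ _))).trans (hmin _ _ _)

end Iterate

section Wedge

variable {R : Type*} [CommRing R]

/-- The determinant `p₀q₁ - p₁q₀` of two vectors of the plane, which measures how far they are
from being proportional. -/
def wedge (p q : Fin 2 → R) : R := p 0 * q 1 - p 1 * q 0

lemma wedge_swap (p q : Fin 2 → R) : wedge q p = -wedge p q := by
  simp only [wedge]
  ring

lemma wedge_smul_smul (a b : R) (p q : Fin 2 → R) :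
    wedge (a • p) (b • q) = a * b * wedge p q := by
  simp only [wedge, Pi.smul_apply, smul_eq_mul]
  ring

lemma mul_wedge_eq_add (p q r : Fin 2 → R) (i : Fin 2) :
    q i * wedge p r = p i * wedge q r + r i * wedge p q := by
  fin_cases i <;> simp only [wedge, Fin.zero_eta, Fin.mk_one] <;> ring

lemma map_wedge {S : Type*} [CommRing S] (g : R →+* S) (p q : Fin 2 → R) :
    g (wedge p q) = wedge (fun i => g (p i)) (fun i => g (q i)) := by
  simp only [wedge, map_sub, map_mul]

lemma wedge_dvd_monomial_sub_monomial (p q : Fin 2 → R) {m n : Fin 2 → ℕ}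
    (hmn : m 0 + m 1 = n 0 + n 1) :
    wedge p q ∣ (∏ i, p i ^ m i) * (∏ i, q i ^ n i) - (∏ i, p i ^ n i) * ∏ i, q i ^ m i := by
  wlog hle : m 0 ≤ n 0 generalizing m n
  · exact dvd_sub_comm.mp (this hmn.symm (by omega))
  obtain ⟨k, hk⟩ := Nat.exists_eq_add_of_le hle
  have hk' : m 1 = n 1 + k := by omega
  have hfactor : (∏ i, p i ^ m i) * (∏ i, q i ^ n i) - (∏ i, p i ^ n i) * ∏ i, q i ^ m i =
      p 0 ^ m 0 * q 0 ^ m 0 * p 1 ^ n 1 * q 1 ^ n 1 *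
        ((p 1 * q 0) ^ k - (p 0 * q 1) ^ k) := by
    simp only [Fin.prod_univ_two, hk, hk']
    ring
  rw [hfactor]
  exact (dvd_sub_comm.mp (sub_dvd_pow_sub_pow (p 0 * q 1) (p 1 * q 0) k)).mul_left _

lemma wedge_dvd_wedge_eval {d : ℕ} {F : Fin 2 → MvPolynomial (Fin 2) R}
    (hF : ∀ i, (F i).IsHomogeneous d) (p q : Fin 2 → R) :
    wedge p q ∣ wedge (fun i => eval p (F i)) (fun i => eval q (F i)) := by
  have hdeg {i : Fin 2} {m : Fin 2 →₀ ℕ} (hm : m ∈ (F i).support) : m 0 + m 1 = d := by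
    simpa [Finsupp.weight_apply, Finsupp.sum_fintype] using hF i (mem_support_iff.mp hm)
  have hexpand : wedge (fun i => eval p (F i)) (fun i => eval q (F i)) =
      ∑ m ∈ (F 0).support, ∑ n ∈ (F 1).support, (F 0).coeff m * (F 1).coeff n *
        ((∏ i, p i ^ m i) * (∏ i, q i ^ n i) - (∏ i, p i ^ n i) * ∏ i, q i ^ m i) := by
    simp only [wedge, eval_eq', Finset.sum_mul_sum]
    rw [Finset.sum_comm (s := (F 1).support)]
    simp only [← Finset.sum_sub_distrib]
    refine Finset.sum_congr rfl fun m _ => Finset.sum_congr rfl fun n _ => ?_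
    ring
  rw [hexpand]
  exact Finset.dvd_sum fun m hm => Finset.dvd_sum fun n hn =>
    (wedge_dvd_monomial_sub_monomial p q ((hdeg hm).trans (hdeg hn).symm)).mul_left _

lemma wedge_rep_ne_zero {K : Type*} [Field K] {P Q : P1 K} (h : P ≠ Q) :
    wedge P.rep Q.rep ≠ 0 := by
  have hindep := Projectivization.linearIndependent_pair_iff_ne.mpr h
  have hdet := (Matrix.isUnit_iff_isUnit_det _).mp
    (Matrix.linearIndependent_rows_iff_isUnit (A := Matrix.of ![P.rep, Q.rep]).mp hindep)
  simpa [Matrix.det_fin_two, wedge] using hdet.ne_zero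

end Wedge

section ChordalDist

variable {K : Type*} [Field K] {Γ : Type*} [LinearOrderedCommGroupWithZero Γ]
  (V : Valuation K Γ)

/-- The sup norm on `K²` attached to a valuation on `K`. -/
def supNorm (p : Fin 2 → K) : Γ := max (V (p 0)) (V (p 1))

lemma le_supNorm (p : Fin 2 → K) (i : Fin 2) : V (p i) ≤ supNorm V p := by
  fin_cases i
  · exact le_max_left _ _
  · exact le_max_right _ _

lemma exists_eq_supNorm (p : Fin 2 → K) : ∃ i, V (p i) = supNorm V p := by
  rcases max_choice (V (p 0)) (V (p 1)) with h | h
  · exact ⟨0, h.symm⟩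
  · exact ⟨1, h.symm⟩

lemma supNorm_ne_zero {p : Fin 2 → K} (hp : p ≠ 0) : supNorm V p ≠ 0 := by
  obtain ⟨i, hi⟩ := Function.ne_iff.mp hp
  exact ((zero_lt_iff.mpr (V.ne_zero_iff.mpr hi)).trans_le (le_supNorm V p i)).ne'

lemma supNorm_smul (c : K) (p : Fin 2 → K) : supNorm V (c • p) = V c * supNorm V p := by
  simp only [supNorm, Pi.smul_apply, smul_eq_mul, map_mul]
  exact (mul_right_mono (a := V c)).map_max.symm

/-- The chordal distance on `ℙ¹(K)` attached to a valuation on `K`: the multiplicative counterpart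
of `logDist`, with values in the value group and equal to `0` on the diagonal. -/
noncomputable def chordalDist (P Q : P1 K) : Γ :=
  V (wedge P.rep Q.rep) / (supNorm V P.rep * supNorm V Q.rep)

lemma chordalDist_mk {p q : Fin 2 → K} (hp : p ≠ 0) (hq : q ≠ 0) :
    chordalDist V (Projectivization.mk K p hp) (Projectivization.mk K q hq) =
      V (wedge p q) / (supNorm V p * supNorm V q) := by
  obtain ⟨a, ha⟩ := Projectivization.exists_smul_eq_mk_rep K p hp
  obtain ⟨b, hb⟩ := Projectivization.exists_smul_eq_mk_rep K q hq
  have hab : V a * V b ≠ 0 := by simp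
  rw [chordalDist, ← ha, ← hb, Units.smul_def, Units.smul_def, wedge_smul_smul, supNorm_smul,
    supNorm_smul, map_mul, map_mul, mul_mul_mul_comm, mul_div_mul_left _ _ hab]

lemma chordalDist_eq_zero_iff {P Q : P1 K} : chordalDist V P Q = 0 ↔ P = Q := by
  constructor
  · contrapose!
    exact fun h => div_ne_zero (V.ne_zero_iff.mpr (wedge_rep_ne_zero h))
      (mul_ne_zero (supNorm_ne_zero V P.rep_nonzero) (supNorm_ne_zero V Q.rep_nonzero))
  · rintro rfl
    simp [chordalDist, wedge, mul_comm]

lemma chordalDist_comm (P Q : P1 K) : chordalDist V P Q = chordalDist V Q P := by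
  rw [chordalDist, chordalDist, wedge_swap, Valuation.map_neg, mul_comm (supNorm V P.rep)]

lemma supNorm_mul_wedge_le (p q r : Fin 2 → K) :
    supNorm V q * V (wedge p r) ≤
      max (supNorm V p * V (wedge q r)) (supNorm V r * V (wedge p q)) := by
  obtain ⟨i, hi⟩ := exists_eq_supNorm V q
  calc supNorm V q * V (wedge p r)
      = V (p i * wedge q r + r i * wedge p q) := by rw [← hi, ← map_mul, mul_wedge_eq_add]
    _ ≤ max (V (p i * wedge q r)) (V (r i * wedge p q)) := V.map_add _ _
    _ ≤ max (supNorm V p * V (wedge q r)) (supNorm V r * V (wedge p q)) := by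
      rw [map_mul, map_mul]
      gcongr <;> exact le_supNorm V _ i

end ChordalDist

section Unimodular

variable {K : Type*} [Field K] {Γ : Type*} [LinearOrderedCommGroupWithZero Γ]
  {V : Valuation K Γ}

lemma supNorm_coe_eq_one {p : Fin 2 → V.valuationSubring} (hp : ∃ i, IsUnit (p i)) :
    supNorm V (fun i => (p i : K)) = 1 := by
  obtain ⟨i, hi⟩ := hp
  have hVi : V (p i : K) = 1 :=
    (Valuation.valuationSubring.integers V).isUnit_iff_valuation_eq_one.mp hi
  exact le_antisymm (max_le (p 0).2 (p 1).2)
    (hVi.symm.trans_le (le_supNorm V (fun i => (p i : K)) i))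

lemma coe_ne_zero_of_exists_isUnit {p : Fin 2 → V.valuationSubring} (hp : ∃ i, IsUnit (p i)) :
    (fun i => (p i : K)) ≠ 0 := by
  obtain ⟨i, hi⟩ := hp
  exact fun h => hi.ne_zero (Subtype.ext (congrFun h i))

lemma exists_eq_mk_of_valuationSubring (V : Valuation K Γ) (P : P1 K) :
    ∃ (p : Fin 2 → V.valuationSubring) (hp : ∃ i, IsUnit (p i)),
      P = Projectivization.mk K (fun i => (p i : K)) (coe_ne_zero_of_exists_isUnit hp) := by
  induction P using Projectivization.ind with | h p hp =>
  obtain ⟨i, hi⟩ := exists_eq_supNorm V p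
  have hpi : p i ≠ 0 := V.ne_zero_iff.mp (hi ▸ supNorm_ne_zero V hp)
  have hint (j : Fin 2) : V (p j / p i) ≤ 1 := by
    rw [map_div₀, hi]
    exact div_le_one_of_le₀ (le_supNorm V p j) zero_le
  have hunit : IsUnit (⟨p i / p i, hint i⟩ : V.valuationSubring) := by
    simp only [div_self hpi]
    exact isUnit_one
  refine ⟨fun j => ⟨p j / p i, hint j⟩, ⟨i, hunit⟩, ?_⟩
  rw [Projectivization.mk_eq_mk_iff']
  exact ⟨p i, funext fun j => mul_div_cancel₀ (p j) hpi⟩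

lemma chordalDist_mk_coe {p q : Fin 2 → V.valuationSubring} (hp : ∃ i, IsUnit (p i))
    (hq : ∃ i, IsUnit (q i)) :
    chordalDist V (Projectivization.mk K _ (coe_ne_zero_of_exists_isUnit hp))
      (Projectivization.mk K _ (coe_ne_zero_of_exists_isUnit hq)) =
      V (wedge (fun i => (p i : K)) (fun i => (q i : K))) := by
  rw [chordalDist_mk, supNorm_coe_eq_one hp, supNorm_coe_eq_one hq, mul_one, div_one]

lemma chordalDist_le_max (V : Valuation K Γ) (P Q R : P1 K) :
    chordalDist V P R ≤ max (chordalDist V P Q) (chordalDist V Q R) := by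
  obtain ⟨p, hp, rfl⟩ := exists_eq_mk_of_valuationSubring V P
  obtain ⟨q, hq, rfl⟩ := exists_eq_mk_of_valuationSubring V Q
  obtain ⟨r, hr, rfl⟩ := exists_eq_mk_of_valuationSubring V R
  rw [chordalDist_mk_coe hp hr, chordalDist_mk_coe hp hq, chordalDist_mk_coe hq hr, max_comm]
  simpa only [supNorm_coe_eq_one hp, supNorm_coe_eq_one hq, supNorm_coe_eq_one hr, one_mul] using
    supNorm_mul_wedge_le V (fun i => (p i : K)) (fun i => (q i : K)) (fun i => (r i : K))

lemma exists_isUnit_eval {ι σ R L : Type*} [CommSemiring R] [Field L] (g : R →+* L) [IsLocalHom g]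
    {F : ι → MvPolynomial σ R}
    (hF : ∀ x : σ → L, (∀ i, eval x (MvPolynomial.map g (F i)) = 0) → x = 0)
    {p : σ → R} (hp : ∃ j, IsUnit (p j)) : ∃ i, IsUnit (eval p (F i)) := by
  obtain ⟨j, hj⟩ := hp
  by_contra! hnonunit
  have hzero : g ∘ p = 0 := hF _ fun i => by
    rw [eval_map, ← eval₂_comp]
    by_contra hne
    exact hnonunit i ((isUnit_map_iff g _).mp (isUnit_iff_ne_zero.mpr hne))
  exact (hj.map g).ne_zero (congrFun hzero j)

end Unimodular

lemma P1Map.toFun_mk_of_map_eq {K R : Type*} [Field K] [CommSemiring R] {d : ℕ} (φ : P1Map K d)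
    (g : R →+* K) {c : K} (hc : c ≠ 0) {F : Fin 2 → MvPolynomial (Fin 2) R}
    (hF : MvPolynomial.map g (F 0) = C c * φ.F) (hG : MvPolynomial.map g (F 1) = C c * φ.G)
    {p : Fin 2 → R} (hp : (fun i => g (p i)) ≠ 0) (hFp : (fun i => g (eval p (F i))) ≠ 0) :
    φ.toFun (Projectivization.mk K _ hp) = Projectivization.mk K _ hFp := by
  have heta : ![g (p 0), g (p 1)] = fun i => g (p i) := FinVec.etaExpand_eq fun i => g (p i)
  have heval {H : MvPolynomial (Fin 2) R} {H' : MvPolynomial (Fin 2) K}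
      (hH : MvPolynomial.map g H = C c * H') :
      g (eval p H) = c * eval ![g (p 0), g (p 1)] H' := by
    rw [eval₂_comp, ← eval_map, hH, eval_mul, eval_C, heta]
    rfl
  have hval : (fun i => g (eval p (F i))) =
      c • ![eval ![g (p 0), g (p 1)] φ.F, eval ![g (p 0), g (p 1)] φ.G] :=
    funext (Fin.forall_fin_two.mpr ⟨heval hF, heval hG⟩)
  have hcompat := φ.compat (g (p 0)) (g (p 1)) (heta ▸ hp)
    (fun h => hFp (by rw [hval, h, smul_zero]))
  simp only [heta] at hcompat hval
  rw [hcompat, Projectivization.mk_eq_mk_iff']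
  exact ⟨c⁻¹, by rw [hval, inv_smul_smul₀ hc]⟩

lemma P1Map.chordalDist_toFun_le_of_map_eq {K Γ : Type*} [Field K]
    [LinearOrderedCommGroupWithZero Γ] {V : Valuation K Γ} {d : ℕ} (φ : P1Map K d) {c : K}
    (hc : c ≠ 0) {F : Fin 2 → MvPolynomial (Fin 2) V.valuationSubring}
    (hF : MvPolynomial.map V.valuationSubring.subtype (F 0) = C c * φ.F)
    (hG : MvPolynomial.map V.valuationSubring.subtype (F 1) = C c * φ.G)
    (hunit : ∀ p : Fin 2 → V.valuationSubring,
      (∃ i, IsUnit (p i)) → ∃ i, IsUnit (eval p (F i))) (P Q : P1 K) :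
    chordalDist V (φ.toFun P) (φ.toFun Q) ≤ chordalDist V P Q := by
  have hhom : ∀ i, (F i).IsHomogeneous d :=
    Fin.forall_fin_two.mpr
      ⟨IsHomogeneous.of_map Subtype.val_injective (hF ▸ φ.homF.C_mul c),
        IsHomogeneous.of_map Subtype.val_injective (hG ▸ φ.homG.C_mul c)⟩
  have htoFun {p : Fin 2 → V.valuationSubring} (hp : ∃ i, IsUnit (p i)) :
      φ.toFun (Projectivization.mk K _ (coe_ne_zero_of_exists_isUnit hp)) =
        Projectivization.mk K _ (coe_ne_zero_of_exists_isUnit (hunit p hp)) :=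
    φ.toFun_mk_of_map_eq V.valuationSubring.subtype hc hF hG _ _
  obtain ⟨p, hp, rfl⟩ := exists_eq_mk_of_valuationSubring V P
  obtain ⟨q, hq, rfl⟩ := exists_eq_mk_of_valuationSubring V Q
  rw [htoFun hp, htoFun hq, chordalDist_mk_coe (hunit p hp) (hunit q hq),
    chordalDist_mk_coe hp hq]
  have hle := (Valuation.valuationSubring.integers V).le_of_dvd (wedge_dvd_wedge_eval hhom p q)
  rwa [map_wedge, map_wedge] at hle

section LogDist

variable {K : Type*} [Field K] [NumberField K] {d : ℕ} {φ : P1Map K d}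
  {v : HeightOneSpectrum (𝓞 K)}

lemma GoodReductionAt.exists_integral_forms (hgr : GoodReductionAt φ v) :
    ∃ (c : K) (F : Fin 2 → MvPolynomial (Fin 2) (v.valuation K).valuationSubring), c ≠ 0 ∧
      MvPolynomial.map (v.valuation K).valuationSubring.subtype (F 0) = C c * φ.F ∧
      MvPolynomial.map (v.valuation K).valuationSubring.subtype (F 1) = C c * φ.G ∧
      ∀ p : Fin 2 → (v.valuation K).valuationSubring,
        (∃ i, IsUnit (p i)) → ∃ i, IsUnit (eval p (F i)) := by
  obtain ⟨c, hc, F₀, G₀, hF, hG, -, hred⟩ := hgr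
  let k := IsLocalRing.ResidueField (v.valuation K).valuationSubring
  let residueBar := (algebraMap k (AlgebraicClosure k)).comp (IsLocalRing.residue _)
  refine ⟨c, ![F₀, G₀], hc, hF, hG, fun p hp =>
    exists_isUnit_eval residueBar (fun x hx => ?_) hp⟩
  have hx' : ![x 0, x 1] = x := FinVec.etaExpand_eq x
  obtain ⟨h0, h1⟩ := hred (x 0) (x 1) (by rw [hx']; exact hx 0) (by rw [hx']; exact hx 1)
  exact funext (Fin.forall_fin_two.mpr ⟨h0, h1⟩)

lemma GoodReductionAt.chordalDist_toFun_le (hgr : GoodReductionAt φ v) (P Q : P1 K) :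
    chordalDist (v.valuation K) (φ.toFun P) (φ.toFun Q) ≤ chordalDist (v.valuation K) P Q := by
  obtain ⟨c, F, hc, hF, hG, hunit⟩ := hgr.exists_integral_forms
  exact φ.chordalDist_toFun_le_of_map_eq hc hF hG hunit P Q

lemma ordAt_eq_neg_log (x : K) : ordAt v x = -WithZero.log (v.valuation K x) := by
  unfold ordAt
  split_ifs with hx
  · simp [hx]
  · rw [WithZero.toAdd_unzero_eq_log]

lemma minOrd_eq_neg_log_supNorm (p : Fin 2 → K) :
    minOrd v (p 0) (p 1) = -WithZero.log (supNorm (v.valuation K) p) := by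
  simp only [minOrd, supNorm, ordAt_eq_neg_log]
  split_ifs with h0 h1
  · simp [h0]
  · simp [h1]
  · have hanti : AntitoneOn (fun x : WithZero (Multiplicative ℤ) => -WithZero.log x) {0}ᶜ :=
      fun x hx y hy hxy => neg_le_neg ((WithZero.log_le_log hx hy).mpr hxy)
    exact (hanti.map_max ((v.valuation K).ne_zero_iff.mpr h0)
      ((v.valuation K).ne_zero_iff.mpr h1)).symm

lemma logDist_of_ne {P Q : P1 K} (h : P ≠ Q) :
    logDist v P Q = ((-WithZero.log (chordalDist (v.valuation K) P Q) : ℤ) : WithTop ℤ) := by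
  have hP := supNorm_ne_zero (v.valuation K) P.rep_nonzero
  have hQ := supNorm_ne_zero (v.valuation K) Q.rep_nonzero
  have hPQ := (v.valuation K).ne_zero_iff.mpr (wedge_rep_ne_zero h)
  rw [logDist, if_neg h, minOrd_eq_neg_log_supNorm, minOrd_eq_neg_log_supNorm, ordAt_eq_neg_log,
    chordalDist, WithZero.log_div hPQ (mul_ne_zero hP hQ), WithZero.log_mul hP hQ, wedge]
  congr 1
  ring

lemma logDist_le_logDist_iff {P Q P' Q' : P1 K} :
    logDist v P Q ≤ logDist v P' Q' ↔
      chordalDist (v.valuation K) P' Q' ≤ chordalDist (v.valuation K) P Q := by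
  rcases eq_or_ne P' Q' with h' | h'
  · simp [logDist, h', (chordalDist_eq_zero_iff _).mpr]
  rcases eq_or_ne P Q with h | h
  · rw [(chordalDist_eq_zero_iff _).mpr h, le_zero_iff, chordalDist_eq_zero_iff]
    simp [logDist, h, h']
  · have hne := (chordalDist_eq_zero_iff (v.valuation K)).not.mpr h
    have hne' := (chordalDist_eq_zero_iff (v.valuation K)).not.mpr h'
    rw [logDist_of_ne h, logDist_of_ne h', WithTop.coe_le_coe, neg_le_neg_iff,
      WithZero.log_le_log hne' hne]

lemma logDist_comm (P Q : P1 K) : logDist v P Q = logDist v Q P :=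
  le_antisymm (logDist_le_logDist_iff.mpr (chordalDist_comm _ _ _).le)
    (logDist_le_logDist_iff.mpr (chordalDist_comm _ _ _).le)

lemma min_logDist_le_logDist (P Q R : P1 K) :
    min (logDist v P Q) (logDist v Q R) ≤ logDist v P R := by
  simpa only [min_le_iff, logDist_le_logDist_iff, le_max_iff] using chordalDist_le_max _ P Q R

lemma GoodReductionAt.logDist_le_logDist_toFun (hgr : GoodReductionAt φ v) (P Q : P1 K) :
    logDist v P Q ≤ logDist v (φ.toFun P) (φ.toFun Q) :=
  logDist_le_logDist_iff.mpr (hgr.chordalDist_toFun_le P Q)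

end LogDist

/-- **Lemma (Canci–Paladino).** Let `φ` have good reduction at `𝔭`, let `P₀` be a fixed point
of `φ`, and let `0 < a < b` with `φ^b(P_b) = φ^a(P_a) = P₀` and `φ^{b-a}(P_b) = P_a`. Then
`δ_𝔭(P_b,P_a) = δ_𝔭(P_b,P₀) ≤ δ_𝔭(P_a,P₀)`. -/
theorem logDist_eq_and_le_of_preimages_of_fixed_point
    {K : Type*} [Field K] [NumberField K]
    {d : ℕ} (φ : P1Map K d) (v : HeightOneSpectrum (𝓞 K))
    (hgr : GoodReductionAt φ v)
    (P₀ : P1 K) (hfix : φ.toFun P₀ = P₀)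
    (a b : ℕ) (ha : 0 < a) (hab : a < b)
    (Pb Pa : P1 K) (hPb : φ.toFun^[b] Pb = P₀) (hPa : φ.toFun^[a] Pa = P₀)
    (hba : φ.toFun^[b - a] Pb = Pa) :
    logDist v Pb Pa = logDist v Pb P₀ ∧ logDist v Pb P₀ ≤ logDist v Pa P₀ := by
  have hmono := hgr.logDist_le_logDist_toFun
  subst hba
  constructor
  · exact apply_iterate_eq_of_iterate_eq_fixed hmono logDist_comm min_logDist_le_logDist hfix
      (Nat.sub_pos_of_lt hab) hPb
  · simpa only [Function.iterate_fixed hfix] using le_apply_iterate hmono (b - a) Pb P₀
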